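/- arXiv:2010.12676 — 4 statements merged into one kernel-verified Lean document; each statement's English description precedes it below -/
import Mathlib

section
/- Fix positive integers n and m and let 𝒪(n,m) denote the generation-order polytope. For every matrix W ∈ ℝ^{(n+m)×(m+1)} and every temperature τ > 0, define the sequence of matrices L^(t) ∈ ℝ^{(n+m)×(m+1)} by L^(0) = W/τ and, for each t, L^(t+1) obtained from L^(t) by first replacing each column j with j < m by its log-softmax (i.e. subtracting log ∑_{i=0}^{n+m-1} exp(L^(t)_{i,j}) from every entry of column j) while leaving column m unchanged, and then replacing every row i by its log-softmax (subtracting log ∑_{j=0}^{m} exp(L_{i,j}) from every entry of row i). Then the entrywise exponentials exp(L^(t)) converge, as t → ∞, to the unique maximizer over 𝒪(n,m) of the function O ↦ ⟨W, O⟩ − τ ∑_{i,j} O_{i,j} log O_{i,j} (with the convention 0·log 0 = 0). -/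
open Filter Topology Finset

/-- The generation-order polytope `𝒪(n,m)`: matrices in `ℝ^{(n+m)×(m+1)}` with nonnegative
entries, column sums equal to `1` for every column `j < m`, and all row sums equal to `1`. -/
def genPolytope (n m : ℕ) : Set (Matrix (Fin (n + m)) (Fin (m + 1)) ℝ) :=
  {O | (∀ i j, 0 ≤ O i j) ∧
       (∀ j : Fin (m + 1), (j : ℕ) < m → ∑ i, O i j = 1) ∧
       (∀ i, ∑ j, O i j = 1)}

/-- The entropy-regularized linear objective `⟨W, O⟩ − τ ∑_{i,j} O_{i,j} log O_{i,j}`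
(note `Real.log 0 = 0`, so the convention `0 · log 0 = 0` holds). -/
noncomputable def entObj (n m : ℕ) (W : Matrix (Fin (n + m)) (Fin (m + 1)) ℝ) (τ : ℝ)
    (O : Matrix (Fin (n + m)) (Fin (m + 1)) ℝ) : ℝ :=
  (∑ i, ∑ j, W i j * O i j) - τ * ∑ i, ∑ j, O i j * Real.log (O i j)

/-- Column log-softmax step: every column `j` with `j < m` is replaced by its log-softmax;
column `m` is left unchanged. -/
noncomputable def colStep (n m : ℕ) (L : Matrix (Fin (n + m)) (Fin (m + 1)) ℝ) :
    Matrix (Fin (n + m)) (Fin (m + 1)) ℝ :=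
  fun i j => if (j : ℕ) < m then L i j - Real.log (∑ i', Real.exp (L i' j)) else L i j

/-- Row log-softmax step: every row is replaced by its log-softmax. -/
noncomputable def rowStep (n m : ℕ) (L : Matrix (Fin (n + m)) (Fin (m + 1)) ℝ) :
    Matrix (Fin (n + m)) (Fin (m + 1)) ℝ :=
  fun i j => L i j - Real.log (∑ j', Real.exp (L i j'))

/-- The Bregman iterates: `L⁰ = W/τ`, and `L^{t+1}` is obtained from `L^t` by a column
log-softmax (on columns `j < m`) followed by a row log-softmax. -/
noncomputable def bregmanIter (n m : ℕ) (W : Matrix (Fin (n + m)) (Fin (m + 1)) ℝ) (τ : ℝ) :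
    ℕ → Matrix (Fin (n + m)) (Fin (m + 1)) ℝ
  | 0 => fun i j => W i j / τ
  | t + 1 => rowStep n m (colStep n m (bregmanIter n m W τ t))

/-- Scalar generalized Kullback-Leibler divergence of `q` from `exp l`. -/
noncomputable def klT (q l : ℝ) : ℝ := q * Real.log q - q * l + Real.exp l - q

lemma klT_lower (q l : ℝ) (hq : 0 ≤ q) :
    (Real.exp (l / 2) - Real.sqrt q) ^ 2 ≤ klT q l := by
  unfold klT
  rcases hq.eq_or_lt with rfl | hq
  · have : Real.exp (l / 2) ^ 2 = Real.exp l := by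
      rw [← Real.exp_nat_mul]; congr 1; push_cast; ring
    simp [this]
  · obtain ⟨s, rfl⟩ : ∃ s, Real.exp s = q := ⟨Real.log q, Real.exp_log hq⟩
    have h1 : Real.sqrt (Real.exp s) = Real.exp (s / 2) := (Real.exp_half s).symm
    have h2 : Real.exp l = Real.exp (l / 2) ^ 2 := by
      rw [← Real.exp_nat_mul]; congr 1; push_cast; ring
    have h3 : Real.exp s = Real.exp (s / 2) ^ 2 := by
      rw [← Real.exp_nat_mul]; congr 1; push_cast; ring
    have h4 : Real.exp (l / 2) = Real.exp (s / 2) * Real.exp ((l - s) / 2) := by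
      rw [← Real.exp_add]; congr 1; ring
    have h5 := Real.add_one_le_exp ((l - s) / 2)
    rw [h1, Real.log_exp, h2, h3, h4]
    have h6 := mul_le_mul_of_nonneg_left h5 (sq_nonneg (Real.exp (s / 2)))
    nlinarith [h6]

lemma klT_nonneg (q l : ℝ) (hq : 0 ≤ q) : 0 ≤ klT q l :=
  (sq_nonneg _).trans (klT_lower q l hq)

lemma tendsto_of_klT (q : ℝ) (hq : 0 ≤ q) (l : ℕ → ℝ)
    (h : Tendsto (fun t => klT q (l t)) atTop (𝓝 0)) :
    Tendsto (fun t => Real.exp (l t)) atTop (𝓝 q) := by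
  have h1 : Tendsto (fun t => (Real.exp (l t / 2) - Real.sqrt q) ^ 2) atTop (𝓝 0) :=
    squeeze_zero (fun t => sq_nonneg _) (fun t => klT_lower q (l t) hq) h
  have h2 : Tendsto (fun t => |Real.exp (l t / 2) - Real.sqrt q|) atTop (𝓝 0) := by
    have := (Real.continuous_sqrt.tendsto 0).comp h1
    simpa [Function.comp_def, Real.sqrt_sq_eq_abs] using this
  have h3 := (tendsto_zero_iff_abs_tendsto_zero _).2 h2
  have h4 : Tendsto (fun t => Real.exp (l t / 2)) atTop (𝓝 (Real.sqrt q)) :=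
    tendsto_sub_nhds_zero_iff.1 h3
  have h5 := h4.pow 2
  rw [Real.sq_sqrt hq] at h5
  refine h5.congr (fun t => ?_)
  rw [← Real.exp_nat_mul]; congr 1; push_cast; ring

lemma klT_tendsto (q : ℝ) (hq : 0 ≤ q) (l : ℕ → ℝ)
    (h : Tendsto (fun t => Real.exp (l t)) atTop (𝓝 q)) :
    Tendsto (fun t => klT q (l t)) atTop (𝓝 0) := by
  unfold klT
  rcases hq.eq_or_lt with rfl | hq
  · simpa using h
  · have h1 : Tendsto l atTop (𝓝 (Real.log q)) := by
      simpa using h.log hq.ne'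
    have := (((h1.const_mul q).const_sub (q * Real.log q)).add h).sub_const q
    simpa using this

lemma klT_sum {ι : Type*} [Fintype ι] [Nonempty ι] (q l : ι → ℝ) (hq : ∑ i, q i = 1) :
    ∑ i, klT (q i) (l i) =
      ∑ i, klT (q i) (l i - Real.log (∑ k, Real.exp (l k)))
        + klT 1 (Real.log (∑ k, Real.exp (l k))) := by
  have hS : 0 < ∑ k, Real.exp (l k) :=
    Finset.sum_pos (fun i _ => Real.exp_pos _) Finset.univ_nonempty
  set S := ∑ k, Real.exp (l k) with hSdef
  have h1 : ∀ i, klT (q i) (l i - Real.log S) =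
      klT (q i) (l i) + (q i * Real.log S + (Real.exp (l i) / S - Real.exp (l i))) := by
    intro i
    unfold klT
    rw [Real.exp_sub, Real.exp_log hS]; ring
  simp_rw [h1]
  rw [Finset.sum_add_distrib, Finset.sum_add_distrib, Finset.sum_sub_distrib, ← Finset.sum_mul,
    ← Finset.sum_div, hq, ← hSdef, div_self hS.ne']
  have h2 : klT 1 (Real.log S) = - Real.log S + S - 1 := by
    unfold klT; rw [Real.exp_log hS]; simp
  rw [h2]; ring

/-- Total divergence. -/
noncomputable def DD (n m : ℕ) (Q L : Matrix (Fin (n + m)) (Fin (m + 1)) ℝ) : ℝ :=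
  ∑ i, ∑ j, klT (Q i j) (L i j)

lemma DD_row (n m : ℕ) (Q L : Matrix (Fin (n + m)) (Fin (m + 1)) ℝ)
    (hQ : Q ∈ genPolytope n m) :
    DD n m Q (rowStep n m L) ≤ DD n m Q L := by
  unfold DD
  refine Finset.sum_le_sum fun i _ => ?_
  rw [klT_sum (Q i) (L i) (hQ.2.2 i)]
  have := klT_nonneg 1 (Real.log (∑ k, Real.exp (L i k))) zero_le_one
  simp only [rowStep]
  linarith

lemma DD_col (n m : ℕ) (hn : 0 < n) (Q L : Matrix (Fin (n + m)) (Fin (m + 1)) ℝ)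
    (hQ : Q ∈ genPolytope n m) (j : Fin (m + 1)) (hj : (j : ℕ) < m) :
    DD n m Q (colStep n m L) + klT 1 (Real.log (∑ k, Real.exp (L k j))) ≤ DD n m Q L := by
  have : Nonempty (Fin (n + m)) := ⟨⟨0, by omega⟩⟩
  unfold DD
  rw [Finset.sum_comm, Finset.sum_comm (f := fun i j => klT (Q i j) (L i j))]
  have key : ∀ k : Fin (m + 1), (k : ℕ) < m →
      ∑ i, klT (Q i k) (L i k) = ∑ i, klT (Q i k) (colStep n m L i k)
        + klT 1 (Real.log (∑ i, Real.exp (L i k))) := by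
    intro k hk
    rw [klT_sum (fun i => Q i k) (fun i => L i k) (hQ.2.1 k hk)]
    simp [colStep, hk]
  have hle : ∀ k : Fin (m + 1),
      ∑ i, klT (Q i k) (colStep n m L i k) ≤ ∑ i, klT (Q i k) (L i k) := by
    intro k
    by_cases hk : (k : ℕ) < m
    · have := klT_nonneg 1 (Real.log (∑ i, Real.exp (L i k))) zero_le_one
      rw [key k hk]; linarith
    · simp [colStep, hk]
  rw [← Finset.add_sum_erase _ _ (Finset.mem_univ j),
    ← Finset.add_sum_erase _ (fun k => ∑ i, klT (Q i k) (L i k)) (Finset.mem_univ j)]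
  have h1 := Finset.sum_le_sum (s := Finset.univ.erase j) (fun k _ => hle k)
  have h2 := key j hj
  linarith

lemma DD_nonneg (n m : ℕ) (Q L : Matrix (Fin (n + m)) (Fin (m + 1)) ℝ)
    (hQ : Q ∈ genPolytope n m) : 0 ≤ DD n m Q L :=
  Finset.sum_nonneg fun i _ => Finset.sum_nonneg fun j _ => klT_nonneg _ _ (hQ.1 i j)

lemma klT_le_DD (n m : ℕ) (Q L : Matrix (Fin (n + m)) (Fin (m + 1)) ℝ)
    (hQ : Q ∈ genPolytope n m) (i j) : klT (Q i j) (L i j) ≤ DD n m Q L := by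
  have h1 : klT (Q i j) (L i j) ≤ ∑ j, klT (Q i j) (L i j) :=
    Finset.single_le_sum (f := fun j => klT (Q i j) (L i j))
      (fun j _ => klT_nonneg _ _ (hQ.1 i j)) (Finset.mem_univ j)
  exact h1.trans (Finset.single_le_sum (f := fun i => ∑ j, klT (Q i j) (L i j))
      (fun i _ => Finset.sum_nonneg fun j _ => klT_nonneg _ _ (hQ.1 i j)) (Finset.mem_univ i))

lemma iter_form (n m : ℕ) (W : Matrix (Fin (n + m)) (Fin (m + 1)) ℝ) (τ : ℝ) (t : ℕ) :
    ∃ (a : Fin (n + m) → ℝ) (b : Fin (m + 1) → ℝ), (∀ j : Fin (m + 1), ¬ (j : ℕ) < m → b j = 0) ∧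
      ∀ i j, bregmanIter n m W τ t i j = W i j / τ + a i + b j := by
  induction t with
  | zero => exact ⟨0, 0, by simp, by simp [bregmanIter]⟩
  | succ t ih =>
    obtain ⟨a, b, hb, h⟩ := ih
    refine ⟨fun i => a i - Real.log (∑ j', Real.exp (colStep n m (bregmanIter n m W τ t) i j')),
      fun j => b j - if (j : ℕ) < m then
        Real.log (∑ i', Real.exp (bregmanIter n m W τ t i' j)) else 0, ?_, ?_⟩
    · intro j hj; simp [hj, hb j hj]
    · intro i j
      simp only [bregmanIter, rowStep]
      have : colStep n m (bregmanIter n m W τ t) i j = W i j / τ + a i + (b j - if (j : ℕ) < m then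
        Real.log (∑ i', Real.exp (bregmanIter n m W τ t i' j)) else 0) := by
        simp only [colStep]
        split_ifs <;> rw [h i j] <;> ring
      rw [this]; ring

lemma DD_form (n m : ℕ) (W : Matrix (Fin (n + m)) (Fin (m + 1)) ℝ) (τ : ℝ) (hτ : 0 < τ) (t : ℕ) :
    ∃ C : ℝ, ∀ Q ∈ genPolytope n m,
      DD n m Q (bregmanIter n m W τ t) = C - entObj n m W τ Q / τ := by
  obtain ⟨a, b, hb, h⟩ := iter_form n m W τ t
  refine ⟨(∑ i, ∑ j, Real.exp (bregmanIter n m W τ t i j)) - ∑ i, a i - ∑ j, b j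
    - ∑ i : Fin (n + m), (1 : ℝ), fun Q hQ => ?_⟩
  have h1 : ∀ i j, klT (Q i j) (bregmanIter n m W τ t i j) =
      Q i j * Real.log (Q i j) - W i j * Q i j / τ - Q i j * a i - Q i j * b j
        + Real.exp (bregmanIter n m W τ t i j) - Q i j := by
    intro i j
    unfold klT
    conv_lhs => rw [show Q i j * bregmanIter n m W τ t i j = Q i j * (W i j / τ + a i + b j) by
      rw [h i j]]
    ring
  unfold DD entObj
  simp_rw [h1, Finset.sum_sub_distrib, Finset.sum_add_distrib, Finset.sum_sub_distrib]
  have ha : ∑ i, ∑ j, Q i j * a i = ∑ i, a i := by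
    refine Finset.sum_congr rfl fun i _ => ?_
    rw [← Finset.sum_mul, hQ.2.2 i, one_mul]
  have hb' : ∑ i, ∑ j, Q i j * b j = ∑ j, b j := by
    rw [Finset.sum_comm]
    refine Finset.sum_congr rfl fun j _ => ?_
    by_cases hj : (j : ℕ) < m
    · rw [← Finset.sum_mul, hQ.2.1 j hj, one_mul]
    · simp [hb j hj]
  have hc : ∑ i, ∑ j, Q i j = ∑ i : Fin (n + m), (1 : ℝ) :=
    Finset.sum_congr rfl fun i _ => hQ.2.2 i
  rw [ha, hb', hc]
  simp_rw [← Finset.sum_div]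
  field_simp
  ring

lemma poly_nonempty (n m : ℕ) (hn : 0 < n) : ∃ Q, Q ∈ genPolytope n m := by
  have h0 : (0 : ℝ) < n + m := by positivity
  refine ⟨fun _ j => if (j : ℕ) < m then 1 / (n + m : ℝ) else n / (n + m : ℝ), ?_, ?_, ?_⟩
  · intro i j; dsimp only; split_ifs <;> positivity
  · intro j hj
    simp [hj]
    field_simp
  · intro i
    rw [Fin.sum_univ_castSucc]
    simp
    field_simp
    ring

/-- Bregman's method converges: the entrywise exponentials `exp(L^t)` tend, as `t → ∞`, to the
unique maximizer of `O ↦ ⟨W, O⟩ − τ ∑ O_{ij} log O_{ij}` over the generation-order polytope. -/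
theorem bregman_iter_tendsto_unique_entropic_maximizer
    (n m : ℕ) (hn : 0 < n) (hm : 0 < m)
    (W : Matrix (Fin (n + m)) (Fin (m + 1)) ℝ) (τ : ℝ) (hτ : 0 < τ) :
    ∃ Ostar ∈ genPolytope n m,
      (∀ O ∈ genPolytope n m, entObj n m W τ O ≤ entObj n m W τ Ostar) ∧
      (∀ O ∈ genPolytope n m,
        (∀ O' ∈ genPolytope n m, entObj n m W τ O' ≤ entObj n m W τ O) → O = Ostar) ∧
      Tendsto
        (fun t => (fun i j => Real.exp (bregmanIter n m W τ t i j) :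
          Matrix (Fin (n + m)) (Fin (m + 1)) ℝ))
        atTop (𝓝 Ostar) := by
  have : Nonempty (Fin (n + m)) := ⟨⟨0, by omega⟩⟩
  set L := bregmanIter n m W τ with hL
  have hrow : ∀ t i, ∑ j, Real.exp (L (t + 1) i j) = 1 := by
    intro t i
    have hS : 0 < ∑ j, Real.exp (colStep n m (L t) i j) :=
      Finset.sum_pos (fun i _ => Real.exp_pos _) Finset.univ_nonempty
    simp only [hL, bregmanIter, rowStep]
    simp only [hL] at hS
    simp_rw [Real.exp_sub, Real.exp_log hS]
    rw [← Finset.sum_div, div_self hS.ne']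
  have hstep : ∀ Q ∈ genPolytope n m, ∀ t, ∀ j : Fin (m + 1), (j : ℕ) < m →
      DD n m Q (L (t + 1)) + klT 1 (Real.log (∑ k, Real.exp (L t k j))) ≤ DD n m Q (L t) := by
    intro Q hQ t j hj
    have h1 := DD_col n m hn Q (L t) hQ j hj
    have h2 := DD_row n m Q (colStep n m (L t)) hQ
    have h3 : L (t + 1) = rowStep n m (colStep n m (L t)) := rfl
    rw [h3]; linarith
  have hanti : ∀ Q ∈ genPolytope n m, Antitone (fun t => DD n m Q (L t)) := by
    intro Q hQ
    refine antitone_nat_of_succ_le fun t => ?_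
    have h1 := hstep Q hQ t ⟨0, by omega⟩ hm
    have h2 := klT_nonneg 1 (Real.log (∑ k, Real.exp (L t k ⟨0, by omega⟩))) zero_le_one
    linarith
  have hcol : ∀ j : Fin (m + 1), (j : ℕ) < m →
      Tendsto (fun t => ∑ k, Real.exp (L t k j)) atTop (𝓝 1) := by
    intro j hj
    obtain ⟨Q, hQ⟩ := poly_nonempty n m hn
    have hc := tendsto_atTop_ciInf (hanti Q hQ)
      ⟨0, by rintro _ ⟨t, rfl⟩; exact DD_nonneg n m Q _ hQ⟩
    have hd := hc.sub (hc.comp (tendsto_add_atTop_nat 1))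
    rw [sub_self] at hd
    have hk : Tendsto (fun t => klT 1 (Real.log (∑ k, Real.exp (L t k j)))) atTop (𝓝 0) := by
      refine squeeze_zero (fun t => klT_nonneg _ _ zero_le_one) (fun t => ?_) hd
      have := hstep Q hQ t j hj
      simp only [Function.comp_def]
      linarith
    refine (tendsto_of_klT 1 zero_le_one _ hk).congr fun t => ?_
    exact Real.exp_log (Finset.sum_pos (fun i _ => Real.exp_pos _) Finset.univ_nonempty)
  -- a convergent subsequence
  have hcomp : IsCompact (Set.pi Set.univ fun _ : Fin (n + m) =>
      Set.pi Set.univ fun _ : Fin (m + 1) => Set.Icc (0 : ℝ) 1) :=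
    isCompact_univ_pi fun _ => isCompact_univ_pi fun _ => isCompact_Icc
  obtain ⟨P, -, φ, hφ, hlim⟩ := hcomp.tendsto_subseq
    (x := fun t => (fun i j => Real.exp (L (t + 1) i j))) (by
      intro t i _ j _
      refine ⟨(Real.exp_pos _).le, ?_⟩
      rw [← hrow t i]
      exact Finset.single_le_sum (f := fun j => Real.exp (L (t + 1) i j))
        (fun j _ => (Real.exp_pos _).le) (Finset.mem_univ j))
  have hent : ∀ i j, Tendsto (fun s => Real.exp (L (φ s + 1) i j)) atTop (𝓝 (P i j)) := by
    intro i j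
    exact tendsto_pi_nhds.1 (tendsto_pi_nhds.1 hlim i) j
  have hsub : Tendsto (fun s => φ s + 1) atTop atTop :=
    (tendsto_add_atTop_nat 1).comp hφ.tendsto_atTop
  have hP : P ∈ genPolytope n m := by
    refine ⟨fun i j => ge_of_tendsto' (hent i j) fun s => (Real.exp_pos _).le, ?_, ?_⟩
    · intro j hj
      exact tendsto_nhds_unique (tendsto_finsetSum _ fun i _ => hent i j) ((hcol j hj).comp hsub)
    · intro i
      refine tendsto_nhds_unique (tendsto_finsetSum _ fun j _ => hent i j) ?_
      simp_rw [hrow]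
      exact tendsto_const_nhds
  have hDsub : Tendsto (fun s => DD n m P (L (φ s + 1))) atTop (𝓝 0) := by
    have : Tendsto (fun s => ∑ i, ∑ j, klT (P i j) (L (φ s + 1) i j)) atTop
        (𝓝 (∑ i : Fin (n + m), ∑ j : Fin (m + 1), (0 : ℝ))) :=
      tendsto_finsetSum _ fun i _ => tendsto_finsetSum _ fun j _ =>
        klT_tendsto _ (hP.1 i j) _ (hent i j)
    simpa [DD] using this
  have hD : Tendsto (fun t => DD n m P (L t)) atTop (𝓝 0) := by
    have hc := tendsto_atTop_ciInf (hanti P hP)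
      ⟨0, by rintro _ ⟨t, rfl⟩; exact DD_nonneg n m P _ hP⟩
    have := tendsto_nhds_unique (hc.comp hsub) hDsub
    rwa [this] at hc
  have hDQ : ∀ Q ∈ genPolytope n m, ∀ t,
      DD n m Q (L t) = DD n m P (L t) + (entObj n m W τ P - entObj n m W τ Q) / τ := by
    intro Q hQ t
    obtain ⟨C, hC⟩ := DD_form n m W τ hτ t
    rw [hL, hC Q hQ, hC P hP]; ring
  have hconv : ∀ Q ∈ genPolytope n m, Tendsto (fun t => DD n m Q (L t)) atTop (𝓝 0) →
      Tendsto (fun t => (fun i j => Real.exp (L t i j) :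
          Matrix (Fin (n + m)) (Fin (m + 1)) ℝ)) atTop (𝓝 Q) := by
    intro Q hQ h
    refine tendsto_pi_nhds.2 fun i => tendsto_pi_nhds.2 fun j => ?_
    exact tendsto_of_klT _ (hQ.1 i j) _ (squeeze_zero (fun t => klT_nonneg _ _ (hQ.1 i j))
      (fun t => klT_le_DD n m Q (L t) hQ i j) h)
  have hmax : ∀ O ∈ genPolytope n m, entObj n m W τ O ≤ entObj n m W τ P := by
    intro O hO
    have h1 := hD.add_const ((entObj n m W τ P - entObj n m W τ O) / τ)
    have h2 := ge_of_tendsto' h1 fun t => (hDQ O hO t) ▸ DD_nonneg n m O (L t) hO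
    rw [zero_add] at h2
    have h3 := mul_nonneg h2 hτ.le
    rw [div_mul_cancel₀ _ hτ.ne'] at h3
    linarith
  refine ⟨P, hP, hmax, ?_, hconv P hP hD⟩
  intro O hO hOmax
  have heq : entObj n m W τ P = entObj n m W τ O := le_antisymm (hOmax P hP) (hmax O hO)
  have hDO : Tendsto (fun t => DD n m O (L t)) atTop (𝓝 0) := by
    refine hD.congr fun t => ?_
    rw [hDQ O hO t, heq]; simp
  ext i j
  exact tendsto_nhds_unique (tendsto_pi_nhds.1 (tendsto_pi_nhds.1 (hconv O hO hDO) i) j)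
    (tendsto_pi_nhds.1 (tendsto_pi_nhds.1 (hconv P hP hD) i) j)
end

section
/- Fix positive integers n and m and let 𝒪(n,m) denote the generation-order polytope. For every cost matrix c ∈ ℝ^{(n+m)×(m+1)}, the maximum of O ↦ ⟨c, O⟩ over 𝒪(n,m) is attained at some matrix all of whose entries lie in {0, 1}; that is, there exists O* ∈ 𝒪(n,m) with O*_{i,j} ∈ {0,1} for all i,j such that ⟨c, O*⟩ ≥ ⟨c, O⟩ for every O ∈ 𝒪(n,m). -/
open Finset

/-- Collapse the `n + m` columns of a square matrix to `m + 1` columns. -/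
def colMap (n m : ℕ) : Fin (n + m) → Fin (m + 1) :=
  Fin.addCases (fun _ => Fin.last m) (fun k => Fin.castSucc k)

/-- Weights used to split the last column. -/
noncomputable def colWt (n m : ℕ) : Fin (n + m) → ℝ :=
  Fin.addCases (fun _ => (1 : ℝ) / n) (fun _ => 1)

lemma sum_colMap (n m : ℕ) (hn : 0 < n) (f : Fin (m + 1) → ℝ) :
    ∑ k, f (colMap n m k) * colWt n m k = ∑ j, f j := by
  have hn' : (n : ℝ) ≠ 0 := by positivity
  rw [Fin.sum_univ_add, Fin.sum_univ_castSucc]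
  simp [colMap, colWt]
  field_simp
  ring

lemma colWt_nonneg (n m : ℕ) (k) : 0 ≤ colWt n m k := by
  refine Fin.addCases (fun i => ?_) (fun i => ?_) k <;> simp [colWt]

lemma sum_last (n m : ℕ) {O : Matrix (Fin (n + m)) (Fin (m + 1)) ℝ} (hO : O ∈ genPolytope n m) :
    ∑ i, O i (Fin.last m) = n := by
  obtain ⟨-, h2, h3⟩ := hO
  have h : ∑ j, ∑ i, O i j = (n : ℝ) + m := by
    rw [Finset.sum_comm]; simp [h3]
  rw [Fin.sum_univ_castSucc] at h
  have : ∑ j : Fin m, ∑ i, O i j.castSucc = m := by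
    rw [Finset.sum_congr rfl (fun j _ => h2 j.castSucc (by simp))]; simp
  linarith

lemma lift_mem (n m : ℕ) (hn : 0 < n) {O : Matrix (Fin (n + m)) (Fin (m + 1)) ℝ}
    (hO : O ∈ genPolytope n m) :
    (Matrix.of fun i k => O i (colMap n m k) * colWt n m k) ∈ doublyStochastic ℝ (Fin (n + m)) := by
  have hn' : (n : ℝ) ≠ 0 := by positivity
  rw [mem_doublyStochastic_iff_sum]
  refine ⟨fun i j => mul_nonneg (hO.1 _ _) (colWt_nonneg _ _ _), fun i => ?_, fun k => ?_⟩
  · simp only [Matrix.of_apply]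
    rw [sum_colMap n m hn (fun j => O i j), hO.2.2 i]
  · simp only [Matrix.of_apply]
    rw [← Finset.sum_mul]
    refine Fin.addCases (fun i => ?_) (fun i => ?_) k
    · simp [colMap, colWt, sum_last n m hO, hn']
    · simp [colMap, colWt, hO.2.1 i.castSucc]

/-- For every cost matrix `c`, the maximum of `O ↦ ⟨c, O⟩` over the generation-order polytope
is attained at some matrix all of whose entries lie in `{0, 1}`. -/
theorem genPolytope_linear_max_attained_at_integral
    (n m : ℕ) (hn : 0 < n) (hm : 0 < m) (c : Matrix (Fin (n + m)) (Fin (m + 1)) ℝ) :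
    ∃ Ostar ∈ genPolytope n m,
      (∀ i j, Ostar i j = 0 ∨ Ostar i j = 1) ∧
      ∀ O ∈ genPolytope n m, (∑ i, ∑ j, c i j * O i j) ≤ ∑ i, ∑ j, c i j * Ostar i j := by
  obtain ⟨σ, hσ⟩ := Finite.exists_max
    (fun σ : Equiv.Perm (Fin (n + m)) => ∑ i, c i (colMap n m (σ i)))
  refine ⟨Matrix.of fun i j => if colMap n m (σ i) = j then 1 else 0, ⟨?_, ?_, ?_⟩, ?_, ?_⟩
  · intro i j
    simp only [Matrix.of_apply]
    split_ifs <;> norm_num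
  · intro j hj
    simp only [Matrix.of_apply]
    rw [Equiv.sum_comp σ (fun k => if colMap n m k = j then (1 : ℝ) else 0), Fin.sum_univ_add]
    have hl : Fin.last m ≠ j := by
      rintro rfl
      simp at hj
    obtain ⟨k, rfl⟩ : ∃ k : Fin m, k.castSucc = j := ⟨⟨j, hj⟩, rfl⟩
    simp [colMap, hl]
  · intro i
    simp
  · intro i j
    simp only [Matrix.of_apply]
    split_ifs <;> simp
  · intro O hO
    obtain ⟨w, hw0, hw1, hw⟩ := exists_eq_sum_perm_of_mem_doublyStochastic (lift_mem n m hn hO)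
    have hM : ∀ i k, O i (colMap n m k) * colWt n m k
        = ∑ τ : Equiv.Perm (Fin (n + m)), w τ * (if τ i = k then 1 else 0) := by
      intro i k
      have := congrFun (congrFun hw i) k
      simp only [Matrix.of_apply] at this
      rw [← this, Matrix.sum_apply]
      refine Finset.sum_congr rfl fun τ _ => ?_
      simp [Equiv.Perm.permMatrix, PEquiv.toMatrix_apply, eq_comm]
    calc ∑ i, ∑ j, c i j * O i j
        = ∑ i, ∑ k, c i (colMap n m k) * (O i (colMap n m k) * colWt n m k) := by
          refine Finset.sum_congr rfl fun i _ => ?_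
          rw [← sum_colMap n m hn (fun j => c i j * O i j)]
          simp only [mul_assoc]
      _ = ∑ i, ∑ τ : Equiv.Perm (Fin (n + m)), w τ * c i (colMap n m (τ i)) := by
          refine Finset.sum_congr rfl fun i _ => ?_
          simp only [hM, Finset.mul_sum]
          rw [Finset.sum_comm]
          refine Finset.sum_congr rfl fun τ _ => ?_
          simp [mul_comm]
      _ = ∑ τ : Equiv.Perm (Fin (n + m)), w τ * ∑ i, c i (colMap n m (τ i)) := by
          rw [Finset.sum_comm]
          simp only [Finset.mul_sum]
      _ ≤ ∑ τ : Equiv.Perm (Fin (n + m)), w τ * ∑ i, c i (colMap n m (σ i)) :=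
          Finset.sum_le_sum fun τ _ => mul_le_mul_of_nonneg_left (hσ τ) (hw0 τ)
      _ = ∑ i, c i (colMap n m (σ i)) := by rw [← Finset.sum_mul, hw1, one_mul]
      _ = _ := by simp
end

section
/- Let m and T be positive integers, let α be a type, and let e : Fin m → Fin m → Prop be an edge relation admitting a rank function ρ : Fin m → ℕ such that e j i implies ρ j < ρ i and ρ i < T for all i (i.e. the dependency graph is a DAG of depth at most T). Let g : (Fin m → α) → (Fin m → α) be an update map that is local with respect to e, meaning: for every i and all h, h' : Fin m → α, if h j = h' j for every j with e j i, then (g h) i = (g h') i. Then for every initial assignment h₀ : Fin m → α, the T-fold iterate g^[T] h₀ is a fixed point of g, and moreover g^[t] h₀ = g^[T] h₀ for every t ≥ T. -/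
/-- Iterating a local update map over a DAG of depth at most `T` reaches a fixed point after
`T` steps: if the dependency relation `e` admits a rank function `ρ` with `e j i → ρ j < ρ i`
and `ρ i < T`, and `g` is local with respect to `e` (the `i`-th output depends only on inputs
`j` with `e j i`), then `g^[T] h₀` is a fixed point of `g` and `g^[t] h₀ = g^[T] h₀` for all
`t ≥ T`. -/
theorem dag_local_update_converges
    (m T : ℕ) (hm : 0 < m) (hT : 0 < T) (α : Type*)
    (e : Fin m → Fin m → Prop) (ρ : Fin m → ℕ)
    (hrank : ∀ j i, e j i → ρ j < ρ i) (hdepth : ∀ i, ρ i < T)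
    (g : (Fin m → α) → (Fin m → α))
    (hlocal : ∀ (i : Fin m) (h h' : Fin m → α),
      (∀ j, e j i → h j = h' j) → g h i = g h' i)
    (h₀ : Fin m → α) :
    g (g^[T] h₀) = g^[T] h₀ ∧ ∀ t, T ≤ t → g^[t] h₀ = g^[T] h₀ := by
  have key : ∀ n (h h' : Fin m → α) (i : Fin m), ρ i < n → g^[n] h i = g^[n] h' i := by
    intro n
    induction n with
    | zero => intro h h' i hi; exact absurd hi (Nat.not_lt_zero _)
    | succ n ih =>
      intro h h' i hi
      rw [Function.iterate_succ_apply', Function.iterate_succ_apply']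
      apply hlocal
      intro j hj
      have := hrank j i hj
      exact ih h h' j (by omega)
  have key2 : ∀ h h' : Fin m → α, g^[T] h = g^[T] h' :=
    fun h h' => funext fun i => key T h h' i (hdepth i)
  constructor
  · rw [← Function.iterate_succ_apply' g, Function.iterate_succ_apply]
    exact key2 _ _
  · intro t ht
    obtain ⟨k, rfl⟩ := Nat.exists_eq_add_of_le ht
    rw [Function.iterate_add_apply]
    exact key2 _ _
end

section
/- For every μ ∈ ℝ, let f_μ : ℝ → ℝ be the Gumbel density with location μ and scale 1, f_μ(x) = exp(−(x − μ) − exp(−(x − μ))). Then the Kullback–Leibler divergence of the Gumbel(μ,1) distribution from the Gumbel(0,1) distribution has the closed form ∫_ℝ f_μ(x) · log(f_μ(x) / f_0(x)) dx = exp(−μ) + μ − 1. -/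
open MeasureTheory

/-- The KL divergence of `Gumbel(μ, 1)` from `Gumbel(0, 1)` has the closed form
`exp(−μ) + μ − 1`, where `Gumbel(μ, 1)` has Lebesgue density
`f_μ(x) = exp(−(x − μ) − exp(−(x − μ)))`. -/
theorem gumbel_kl_closed_form (μ : ℝ) :
    (∫ x : ℝ, Real.exp (-(x - μ) - Real.exp (-(x - μ))) *
        Real.log (Real.exp (-(x - μ) - Real.exp (-(x - μ))) /
          Real.exp (-(x - 0) - Real.exp (-(x - 0))))) =
      Real.exp (-μ) + μ - 1 := by
  have h1 : ∀ x : ℝ, Real.exp (-(x - μ) - Real.exp (-(x - μ))) *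
        Real.log (Real.exp (-(x - μ) - Real.exp (-(x - μ))) /
          Real.exp (-(x - 0) - Real.exp (-(x - 0)))) =
      (fun y : ℝ => |Real.exp y| • (Real.exp (-Real.exp y) *
        (μ + (Real.exp (-μ) - 1) * Real.exp y))) (μ - x) := by
    intro x
    have e1 : -(x - μ) = μ - x := by ring
    have e2 : Real.exp (-(x - 0)) = Real.exp (-μ) * Real.exp (μ - x) := by
      rw [← Real.exp_add]; congr 1; ring
    simp only [smul_eq_mul, Real.abs_exp]
    rw [← Real.exp_sub, Real.log_exp, e2, e1, sub_eq_add_neg (μ - x), Real.exp_add]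
    ring
  simp_rw [h1]
  rw [integral_sub_left_eq_self (fun y : ℝ => |Real.exp y| • (Real.exp (-Real.exp y) *
        (μ + (Real.exp (-μ) - 1) * Real.exp y))) volume μ]
  have h2 := integral_image_eq_integral_abs_deriv_smul (s := Set.univ) (f := Real.exp)
    (f' := Real.exp) MeasurableSet.univ
    (fun x _ => (Real.hasDerivAt_exp x).hasDerivWithinAt) Real.exp_injective.injOn
    (fun u : ℝ => Real.exp (-u) * (μ + (Real.exp (-μ) - 1) * u))
  rw [Set.image_univ, Real.range_exp, setIntegral_univ] at h2
  rw [← h2]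
  have i1 : IntegrableOn (fun u : ℝ => Real.exp (-u)) (Set.Ioi 0) := integrableOn_exp_neg_Ioi 0
  have i2 : IntegrableOn (fun u : ℝ => Real.exp (-u) * u) (Set.Ioi 0) := by
    have := Real.GammaIntegral_convergent (s := 2) (by norm_num)
    norm_num at this
    exact this
  have v2 : ∫ u in Set.Ioi (0 : ℝ), Real.exp (-u) * u = 1 := by
    have := Real.Gamma_eq_integral (s := 2) (by norm_num)
    norm_num at this
    exact this.symm
  have h3 : ∀ u : ℝ, Real.exp (-u) * (μ + (Real.exp (-μ) - 1) * u) =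
      μ * Real.exp (-u) + (Real.exp (-μ) - 1) * (Real.exp (-u) * u) := fun u => by ring
  simp_rw [h3]
  rw [integral_add (i1.const_mul _) (i2.const_mul _), integral_const_mul, integral_const_mul,
    v2, integral_exp_neg_Ioi_zero]
  ring
end
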